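/- Let 0 ≤ α ≤ 1/4, c > 0, and n an integer such that q = c²/χ_n^α(c) < 3/17. Then sup_{x∈[0,1]} √((1-x²)(1-qx²)) · (1-x²)^α · |ψ_{n,c}^{(α)}(x)|² ≤ |ψ_{n,c}^{(α)}(0)|² + |ψ_{n,c}^{(α)'}(0)|²/χ_n^α(c) ≤ 2α+1. -/

import Mathlib

open Real MeasureTheory intervalIntegral

/-- The potential produced by the Liouville transformation of the equation of the GPSWFs is
nondecreasing: its derivative (with respect to `y = x²`) is nonnegative. -/
lemma liouvillePotential_deriv_nonneg {a q y : ℝ} (ha1 : 1 ≤ a) (ha2 : a ≤ 3 / 2)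
    (hq0 : 0 ≤ q) (hq : q ≤ 3 / 17) (hy0 : 0 ≤ y) (hy1 : y < 1) :
    0 ≤ (2 * a - a ^ 2) * (1 - q * y ^ 2) / (4 * ((1 - y) ^ 2 * (1 - q * y) ^ 2))
      + a * q / (2 * (1 - q * y) ^ 2) - q ^ 2 / (1 - q * y) ^ 3
      + 5 * q / 4 * (-1 / (1 - q * y) ^ 3 + 3 * q * (1 - y) / (1 - q * y) ^ 4)
      - q / 4 * (-1 / (1 - q * y) ^ 2 + 2 * q * (1 - y) / (1 - q * y) ^ 3) := by
  have hX : 0 < 1 - y := by linarith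
  have hqy : q * y ≤ q := by nlinarith
  have hY : 0 < 1 - q * y := by linarith
  have hK : (1 - y) ^ 2 ≤ 1 - q * y ^ 2 := by nlinarith
  have hb : 0 ≤ 2 * a - a ^ 2 := by nlinarith
  have h1 : (2 * a - a ^ 2) / (4 * (1 - q * y) ^ 2) ≤
      (2 * a - a ^ 2) * (1 - q * y ^ 2) / (4 * ((1 - y) ^ 2 * (1 - q * y) ^ 2)) := by
    rw [div_le_div_iff₀ (by positivity) (by positivity)]
    have := mul_le_mul_of_nonneg_left hK (by positivity : 0 ≤ (2 * a - a ^ 2) * (4 * (1 - q * y) ^ 2))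
    linarith
  set X := 1 - y with hXd
  set Y := 1 - q * y with hYd
  have hX1 : X ≤ 1 := by linarith
  have hY1 : Y ≤ 1 := by nlinarith
  have hYq : 1 - q ≤ Y := by linarith
  have key : 0 ≤ (2 * a - a ^ 2) * Y + (2 * a + 1) * q * Y - 5 * q - 4 * q ^ 2
      - 2 * q ^ 2 * X + 15 * q ^ 2 * X := by
    have e1 : 3 / 4 + 3 * q ≤ (2 * a - a ^ 2) + (2 * a + 1) * q := by nlinarith
    have e2 := mul_le_mul_of_nonneg_right e1 hY.le
    have e3 := mul_le_mul_of_nonneg_left hYq (by positivity : 0 ≤ 3 / 4 + 3 * q)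
    have e4 : 0 ≤ 13 * q ^ 2 * X := by positivity
    nlinarith
  have h2 : 0 ≤ ((2 * a - a ^ 2) * Y + (2 * a + 1) * q * Y - 5 * q - 4 * q ^ 2
      - 2 * q ^ 2 * X + 15 * q ^ 2 * X) * Y + 15 * q ^ 2 * X * (1 - Y) := by
    have : 0 ≤ 1 - Y := by linarith
    positivity
  have h3 : (2 * a - a ^ 2) / (4 * Y ^ 2)
      + a * q / (2 * Y ^ 2) - q ^ 2 / Y ^ 3
      + 5 * q / 4 * (-1 / Y ^ 3 + 3 * q * X / Y ^ 4)
      - q / 4 * (-1 / Y ^ 2 + 2 * q * X / Y ^ 3) =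
      (((2 * a - a ^ 2) * Y + (2 * a + 1) * q * Y - 5 * q - 4 * q ^ 2
      - 2 * q ^ 2 * X + 15 * q ^ 2 * X) * Y + 15 * q ^ 2 * X * (1 - Y)) / (4 * Y ^ 4) := by
    field_simp
    ring
  have h4 : 0 ≤ (((2 * a - a ^ 2) * Y + (2 * a + 1) * q * Y - 5 * q - 4 * q ^ 2
      - 2 * q ^ 2 * X + 15 * q ^ 2 * X) * Y + 15 * q ^ 2 * X * (1 - Y)) / (4 * Y ^ 4) := by
    positivity
  linarith

/-- The potential `θ` of the Liouville normal form `V'' + (χ + θ) V = 0`, with `a = 2α + 1`,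
as a function of `y = x²`. -/
noncomputable def liouvillePotential (a q y : ℝ) : ℝ :=
  (2 * a - a ^ 2) * y / (4 * ((1 - y) * (1 - q * y))) + a / (2 * (1 - q * y))
    - q / (2 * (1 - q * y) ^ 2) + 5 * q * (1 - y) / (4 * (1 - q * y) ^ 3)
    - q * (1 - y) / (4 * (1 - q * y) ^ 2)

lemma hasDerivAt_liouvillePotential {a q y : ℝ} (hX : 1 - y ≠ 0) (hY : 1 - q * y ≠ 0) :
    HasDerivAt (liouvillePotential a q)
      ((2 * a - a ^ 2) * (1 - q * y ^ 2) / (4 * ((1 - y) ^ 2 * (1 - q * y) ^ 2))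
      + a * q / (2 * (1 - q * y) ^ 2) - q ^ 2 / (1 - q * y) ^ 3
      + 5 * q / 4 * (-1 / (1 - q * y) ^ 3 + 3 * q * (1 - y) / (1 - q * y) ^ 4)
      - q / 4 * (-1 / (1 - q * y) ^ 2 + 2 * q * (1 - y) / (1 - q * y) ^ 3)) y := by
  have dX : HasDerivAt (fun y : ℝ => 1 - y) (-1) y := (hasDerivAt_id y).const_sub 1
  have dY : HasDerivAt (fun y : ℝ => 1 - q * y) (-q) y := by
    simpa using ((hasDerivAt_id y).const_mul q).const_sub 1
  have d1 := ((hasDerivAt_id y).const_mul (2 * a - a ^ 2)).fun_div ((dX.fun_mul dY).const_mul 4)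
    (by simp [hX, hY])
  have d2 := (hasDerivAt_const y a).fun_div (dY.const_mul 2) (by simp [hY])
  have d3 := (hasDerivAt_const y q).fun_div ((dY.fun_pow 2).const_mul 2) (by simp [hY])
  have d4 := (dX.const_mul (5 * q)).fun_div ((dY.fun_pow 3).const_mul 4) (by simp [hY])
  have d5 := (dX.const_mul q).fun_div ((dY.fun_pow 2).const_mul 4) (by simp [hY])
  refine ((((d1.fun_add d2).fun_sub d3).fun_add d4).fun_sub d5).congr_deriv ?_
  simp only [id]
  push_cast
  field_simp
  ring

lemma liouvillePotential_monotoneOn {a q : ℝ} (ha1 : 1 ≤ a) (ha2 : a ≤ 3 / 2)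
    (hq0 : 0 ≤ q) (hq : q ≤ 3 / 17) : MonotoneOn (liouvillePotential a q) (Set.Ico 0 1) := by
  have hd : ∀ y ∈ Set.Ico (0 : ℝ) 1, 1 - y ≠ 0 ∧ 1 - q * y ≠ 0 := fun y hy => by
    have := hy.1; have := hy.2
    constructor
    · linarith
    · nlinarith
  refine monotoneOn_of_hasDerivWithinAt_nonneg (convex_Ico 0 1)
    (fun y hy => (hasDerivAt_liouvillePotential (hd y hy).1 (hd y hy).2).continuousAt.continuousWithinAt)
    (fun y hy => (hasDerivAt_liouvillePotential (hd y (interior_subset hy)).1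
      (hd y (interior_subset hy)).2).hasDerivWithinAt)
    fun y hy => liouvillePotential_deriv_nonneg ha1 ha2 hq0 hq
      (interior_subset hy).1 (interior_subset hy).2

lemma hasDerivAt_one_sub_sq (x : ℝ) : HasDerivAt (fun x : ℝ => 1 - x ^ 2) (-(2 * x)) x := by
  simpa using (hasDerivAt_pow 2 x).const_sub 1

lemma hasDerivAt_one_sub_mul_sq (q x : ℝ) :
    HasDerivAt (fun x : ℝ => 1 - q * x ^ 2) (-(2 * q * x)) x :=
  (((hasDerivAt_pow 2 x).const_mul q).const_sub 1).congr_deriv (by simp; ring)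

/-- Derivative of the weight `ω_α(x) = (1 - x²)^α`. -/
lemma hasDerivAt_one_sub_sq_rpow (α : ℝ) {x : ℝ} (hX : 0 < 1 - x ^ 2) :
    HasDerivAt (fun x : ℝ => (1 - x ^ 2) ^ α) (-(2 * x) * α * ((1 - x ^ 2) ^ α / (1 - x ^ 2))) x :=
  ((hasDerivAt_one_sub_sq x).rpow_const (Or.inl hX.ne')).congr_deriv
    (by rw [rpow_sub_one hX.ne'])

/-- Logarithmic derivative of the amplitude `√((1-x²)(1-qx²)) (1-x²)^α`. -/
lemma hasDerivAt_amplitude (α q : ℝ) {x : ℝ} (hX : 0 < 1 - x ^ 2) (hY : 0 < 1 - q * x ^ 2) :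
    HasDerivAt (fun x : ℝ => √((1 - x ^ 2) * (1 - q * x ^ 2)) * (1 - x ^ 2) ^ α)
      (-x * ((2 * α + 1) / (1 - x ^ 2) + q / (1 - q * x ^ 2)) *
        (√((1 - x ^ 2) * (1 - q * x ^ 2)) * (1 - x ^ 2) ^ α)) x := by
  have hXY : 0 < (1 - x ^ 2) * (1 - q * x ^ 2) := mul_pos hX hY
  refine ((((hasDerivAt_one_sub_sq x).fun_mul (hasDerivAt_one_sub_mul_sq q x)).sqrt
    hXY.ne').fun_mul (hasDerivAt_one_sub_sq_rpow α hX)).congr_deriv ?_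
  have hs : √((1 - x ^ 2) * (1 - q * x ^ 2)) ≠ 0 := (sqrt_pos.2 hXY).ne'
  have hs2 := sq_sqrt hXY.le
  generalize √((1 - x ^ 2) * (1 - q * x ^ 2)) = S at *
  generalize (1 - x ^ 2) ^ α = w
  have h1 : ∀ z : ℝ, z / (2 * S) = z * S / (2 * ((1 - x ^ 2) * (1 - q * x ^ 2))) := fun z => by
    rw [← hs2]; field_simp
  have hY' : 1 - x ^ 2 * q ≠ 0 := by rw [mul_comm (x ^ 2)]; exact hY.ne'
  rw [h1]
  field_simp
  ring

/-- The Liouville energy `V² + (dV/dS)² / (χ + θ)` is nonincreasing, which bounds the amplitude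
of `ψ` by the initial data at the origin. -/
lemma amplitude_mul_sq_le {α χ q : ℝ} (hα0 : 0 ≤ α) (hα1 : α ≤ 1 / 4) (hχ : 0 < χ) (hq0 : 0 ≤ q)
    (hq : q ≤ 3 / 17) {ψ ψ' ψ'' : ℝ → ℝ} (h1 : ∀ x, HasDerivAt ψ (ψ' x) x)
    (h2 : ∀ x, HasDerivAt ψ' (ψ'' x) x)
    (hode : ∀ x ∈ Set.Ioo (-1 : ℝ) 1,
      (1 - x ^ 2) * ψ'' x = 2 * (α + 1) * x * ψ' x - χ * (1 - q * x ^ 2) * ψ x)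
    {x : ℝ} (hx : x ∈ Set.Icc (0 : ℝ) 1) :
    √((1 - x ^ 2) * (1 - q * x ^ 2)) * (1 - x ^ 2) ^ α * ψ x ^ 2 ≤ ψ 0 ^ 2 + ψ' 0 ^ 2 / χ := by
  rcases hx.2.eq_or_lt with rfl | hx1
  · simp only [one_pow, sub_self, zero_mul, sqrt_zero]
    positivity
  set a := 2 * α + 1 with ha
  have hmono := liouvillePotential_monotoneOn (a := a) (by linarith) (by linarith) hq0 hq
  have hmem : ∀ t ∈ Set.Ico (0 : ℝ) 1, t ^ 2 ∈ Set.Ico (0 : ℝ) 1 := fun t ht =>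
    ⟨by positivity, by nlinarith [ht.1, ht.2]⟩
  have hX : ∀ t ∈ Set.Ico (0 : ℝ) 1, 0 < 1 - t ^ 2 := fun t ht => by linarith [(hmem t ht).2]
  have hY : ∀ t ∈ Set.Ico (0 : ℝ) 1, 0 < 1 - q * t ^ 2 := fun t ht => by
    nlinarith [(hmem t ht).2, (hmem t ht).1]
  have hθ0 : liouvillePotential a q 0 = (a + q) / 2 := by simp [liouvillePotential]; ring
  have hR : ∀ t ∈ Set.Ico (0 : ℝ) 1, χ ≤ χ + liouvillePotential a q (t ^ 2) := fun t ht => by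
    have := hmono ⟨le_rfl, zero_lt_one⟩ (hmem t ht) (hmem t ht).1
    linarith
  let u : ℝ → ℝ := fun t => -t / 2 * (a / (1 - t ^ 2) + q / (1 - q * t ^ 2))
  let D : ℝ → ℝ := fun t => √((1 - t ^ 2) * (1 - q * t ^ 2)) * (1 - t ^ 2) ^ α
  let s : ℝ → ℝ := fun t => (1 - t ^ 2) / (1 - q * t ^ 2)
  let R : ℝ → ℝ := fun t => χ + liouvillePotential a q (t ^ 2)
  let v : ℝ → ℝ := fun t => ψ' t + u t * ψ t
  let Q : ℝ → ℝ := fun t => D t * (ψ t ^ 2 + s t * v t ^ 2 / R t)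
  have hD0 : ∀ t ∈ Set.Ico (0 : ℝ) 1, 0 ≤ D t := fun t ht =>
    mul_nonneg (sqrt_nonneg _) (rpow_nonneg (hX t ht).le _)
  have hs0 : ∀ t ∈ Set.Ico (0 : ℝ) 1, 0 ≤ s t := fun t ht => (div_pos (hX t ht) (hY t ht)).le
  have hderiv : ∀ t ∈ Set.Ico (0 : ℝ) 1, ∃ θ' ≥ 0,
      HasDerivAt Q (-(D t * (s t * v t ^ 2 * θ' / R t ^ 2))) t := fun t ht => by
    have hXt := (hX t ht).ne'
    have hYt := (hY t ht).ne'
    have hYt' : 1 - t ^ 2 * q ≠ 0 := by rwa [mul_comm (t ^ 2)]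
    have hRt : R t ≠ 0 := (hχ.trans_le (hR t ht)).ne'
    have hθ := liouvillePotential_deriv_nonneg (a := a) (by linarith) (by linarith)
      hq0 hq (hmem t ht).1 (hmem t ht).2
    have dθ := (hasDerivAt_liouvillePotential (a := a) hXt hYt)
    generalize hθ' : (2 * a - a ^ 2) * (1 - q * (t ^ 2) ^ 2) / _ + _ - _ + _ - _ = θ' at hθ dθ
    clear hθ'
    have dR : HasDerivAt R (2 * t * θ') t :=
      ((HasDerivAt.comp (h := fun t => t ^ 2) t dθ (hasDerivAt_pow 2 t)).const_add χ).congr_deriv (by simp; ring)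
    have dD : HasDerivAt D (2 * u t * D t) t :=
      (hasDerivAt_amplitude α q (hX t ht) (hY t ht)).congr_deriv (by simp only [u, D]; ring)
    have dX := hasDerivAt_one_sub_sq t
    have dY := hasDerivAt_one_sub_mul_sq q t
    have ds : HasDerivAt s (-(2 * t * (1 - q)) / (1 - q * t ^ 2) ^ 2) t :=
      (dX.fun_div dY hYt).congr_deriv (by field_simp; ring)
    have du : HasDerivAt u (-(1 / 2) * (a * (1 + t ^ 2) / (1 - t ^ 2) ^ 2
        + q * (1 + q * t ^ 2) / (1 - q * t ^ 2) ^ 2)) t := by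
      refine (((hasDerivAt_id t).fun_neg.div_const 2).fun_mul
        (((hasDerivAt_const t a).fun_div dX hXt).fun_add
          ((hasDerivAt_const t q).fun_div dY hYt))).congr_deriv ?_
      simp only [id]
      field_simp
      ring
    have dv := (h2 t).fun_add (du.fun_mul (h1 t))
    refine ⟨2 * t * θ', mul_nonneg (by linarith [ht.1]) hθ, ?_⟩
    refine (dD.fun_mul (((h1 t).fun_pow 2).fun_add
      ((ds.fun_mul (dv.fun_pow 2)).fun_div dR hRt))).congr_deriv ?_
    have hψ'' : ψ'' t = ((a + 1) * t * ψ' t - χ * (1 - q * t ^ 2) * ψ t) / (1 - t ^ 2) := by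
      rw [eq_div_iff hXt, mul_comm, hode t ⟨by linarith [ht.1], ht.2⟩]
      ring
    have heq : R t * ψ t + (u t * s t + -(2 * t * (1 - q)) / (1 - q * t ^ 2) ^ 2 / 2) * v t
        + s t * (ψ'' t + (-(1 / 2) * (a * (1 + t ^ 2) / (1 - t ^ 2) ^ 2
        + q * (1 + q * t ^ 2) / (1 - q * t ^ 2) ^ 2) * ψ t + u t * ψ' t)) = 0 := by
      rw [hψ'']
      simp only [R, v, u, s, liouvillePotential]
      field_simp
      ring
    generalize ψ'' t + (-(1 / 2) * (a * (1 + t ^ 2) / (1 - t ^ 2) ^ 2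
        + q * (1 + q * t ^ 2) / (1 - q * t ^ 2) ^ 2) * ψ t + u t * ψ' t) = v' at heq ⊢
    generalize -(2 * t * (1 - q)) / (1 - q * t ^ 2) ^ 2 = s' at heq ⊢
    have hv : ψ' t = v t - u t * ψ t := by simp [v]
    change 2 * u t * D t * (ψ t ^ 2 + s t * v t ^ 2 / R t) + D t * (_ + ((s' * v t ^ 2 +
      s t * (_ * v t ^ (2 - 1) * v')) * R t - s t * v t ^ 2 * (2 * t * θ')) / R t ^ 2) = _
    rw [hv]
    field_simp
    push_cast
    linear_combination (2 * v t * D t * R t) * heq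
  have hanti : AntitoneOn Q (Set.Ico 0 1) := by
    choose! θ' hθ' hQ using hderiv
    refine antitoneOn_of_hasDerivWithinAt_nonpos (convex_Ico 0 1)
      (fun t ht => (hQ t ht).continuousAt.continuousWithinAt)
      (fun t ht => (hQ t (interior_subset ht)).hasDerivWithinAt) fun t ht => ?_
    have ht := interior_subset ht
    have := hD0 t ht
    have := hs0 t ht
    have := hθ' t ht
    rw [neg_nonpos]
    positivity
  have hxI : x ∈ Set.Ico (0 : ℝ) 1 := ⟨hx.1, hx1⟩
  have h0I : (0 : ℝ) ∈ Set.Ico (0 : ℝ) 1 := ⟨le_rfl, zero_lt_one⟩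
  calc D x * ψ x ^ 2 ≤ Q x := by
        refine mul_le_mul_of_nonneg_left (le_add_of_nonneg_right ?_) (hD0 x hxI)
        have := hs0 x hxI
        have := hχ.trans_le (hR x hxI)
        positivity
    _ ≤ Q 0 := hanti h0I hxI hx.1
    _ = ψ 0 ^ 2 + ψ' 0 ^ 2 / R 0 := by simp [Q, D, s, v, u]
    _ ≤ _ := by gcongr; exact hR 0 h0I

lemma continuous_one_sub_sq_rpow {α : ℝ} (hα0 : 0 ≤ α) :
    Continuous fun x : ℝ => (1 - x ^ 2) ^ α :=
  (by fun_prop : Continuous fun x : ℝ => 1 - x ^ 2).rpow_const fun _ => Or.inr hα0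

/-- Lower bound for the total mass of the weight `ω_α`. -/
lemma two_div_le_integral_one_sub_sq_rpow {α : ℝ} (hα0 : 0 ≤ α) :
    2 / (1 + α) ≤ ∫ x in (-1 : ℝ)..1, (1 - x ^ 2) ^ α := by
  have hc := continuous_one_sub_sq_rpow hα0
  have hhalf : 1 / (1 + α) ≤ ∫ x in (0 : ℝ)..1, (1 - x ^ 2) ^ α := by
    have h1 : ∫ x in (0 : ℝ)..1, (1 - x) ^ α = 1 / (1 + α) := by
      rw [integral_comp_sub_left (fun x => x ^ α) 1, integral_rpow (Or.inl (by linarith))]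
      simp [zero_rpow (by linarith : α + 1 ≠ 0), add_comm]
    rw [← h1]
    have hc' : Continuous fun x : ℝ => (1 - x) ^ α :=
      (by fun_prop : Continuous fun x : ℝ => 1 - x).rpow_const fun _ => Or.inr hα0
    refine integral_mono_on zero_le_one (hc'.intervalIntegrable _ _) (hc.intervalIntegrable _ _)
      fun x hx => rpow_le_rpow (by linarith [hx.2]) (by nlinarith [hx.1, hx.2]) hα0
  have hneg : ∫ x in (-1 : ℝ)..0, (1 - x ^ 2) ^ α = ∫ x in (0 : ℝ)..1, (1 - x ^ 2) ^ α := by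
    have := integral_comp_neg (a := 0) (b := 1) fun x : ℝ => (1 - x ^ 2) ^ α
    simpa using this.symm
  rw [← integral_add_adjacent_intervals (hc.intervalIntegrable (-1) 0)
    (hc.intervalIntegrable 0 1), hneg]
  have : 2 / (1 + α) = 1 / (1 + α) + 1 / (1 + α) := by ring
  linarith

/-- Integral of a derivative of a function vanishing at both ends of `[-1, 1]`. -/
lemma integral_eq_zero_of_hasDerivAt {f f' : ℝ → ℝ} (hf : ContinuousOn f (Set.Icc (-1) 1))
    (hd : ∀ x ∈ Set.Ioo (-1 : ℝ) 1, HasDerivAt f (f' x) x)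
    (hf' : ContinuousOn f' (Set.Icc (-1) 1)) (h1 : f 1 = 0) (h2 : f (-1) = 0) :
    ∫ x in (-1 : ℝ)..1, f' x = 0 := by
  rw [integral_eq_sub_of_hasDerivAt_of_le (by norm_num) hf hd
    (ContinuousOn.intervalIntegrable_of_Icc (by norm_num) hf'), h1, h2, sub_zero]

lemma integral_linear_combination {f g h k : ℝ → ℝ} (hf : Continuous f) (hg : Continuous g)
    (hh : Continuous h) (hk : Continuous k) (a b c d : ℝ) :
    ∫ x in (-1 : ℝ)..1, (a * f x + b * g x + c * h x + d * k x) =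
      a * (∫ x in (-1 : ℝ)..1, f x) + b * (∫ x in (-1 : ℝ)..1, g x)
        + c * (∫ x in (-1 : ℝ)..1, h x) + d * ∫ x in (-1 : ℝ)..1, k x := by
  rw [intervalIntegral.integral_add, intervalIntegral.integral_add,
    intervalIntegral.integral_add, intervalIntegral.integral_const_mul,
    intervalIntegral.integral_const_mul, intervalIntegral.integral_const_mul,
    intervalIntegral.integral_const_mul]
  all_goals exact Continuous.intervalIntegrable (by fun_prop) _ _

/-- The energy `ψ² + (1-x²) ψ'² / (χ (1-qx²))`. -/
noncomputable def sturmEnergy (χ q : ℝ) (ψ ψ' : ℝ → ℝ) (x : ℝ) : ℝ :=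
  ψ x ^ 2 + (1 - x ^ 2) / (χ * (1 - q * x ^ 2)) * ψ' x ^ 2

section Energy

variable {α χ q : ℝ} {ψ ψ' ψ'' : ℝ → ℝ}

lemma hasDerivAt_sturmEnergy (hχ : 0 < χ) (h1 : ∀ x, HasDerivAt ψ (ψ' x) x)
    (h2 : ∀ x, HasDerivAt ψ' (ψ'' x) x)
    (hode : ∀ x ∈ Set.Ioo (-1 : ℝ) 1,
      (1 - x ^ 2) * ψ'' x = 2 * (α + 1) * x * ψ' x - χ * (1 - q * x ^ 2) * ψ x)
    {x : ℝ} (hx : x ∈ Set.Ioo (-1 : ℝ) 1) (hY : 1 - q * x ^ 2 ≠ 0) :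
    HasDerivAt (sturmEnergy χ q ψ ψ')
      (2 * x * ((2 * α + 1) * (1 - q * x ^ 2) + q * (1 - x ^ 2)) * ψ' x ^ 2 /
        (χ * (1 - q * x ^ 2) ^ 2)) x := by
  have hY' : 1 - x ^ 2 * q ≠ 0 := by rwa [mul_comm (x ^ 2)]
  refine (((h1 x).fun_pow 2).fun_add (((hasDerivAt_one_sub_sq x).fun_div
    ((hasDerivAt_one_sub_mul_sq q x).const_mul χ) (mul_ne_zero hχ.ne' hY)).fun_mul
      ((h2 x).fun_pow 2))).congr_deriv ?_
  have h := hode x hx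
  push_cast
  field_simp
  linear_combination (ψ' x * (1 - q * x ^ 2)) * h

lemma continuousOn_sturmEnergy (hχ : χ ≠ 0)
    (hY : ∀ t ∈ Set.Icc (-1 : ℝ) 1, 1 - q * t ^ 2 ≠ 0) (hψ : Continuous ψ)
    (hψ' : Continuous ψ') : ContinuousOn (sturmEnergy χ q ψ ψ') (Set.Icc (-1) 1) :=
  ContinuousOn.add (by fun_prop) (ContinuousOn.mul (ContinuousOn.div (by fun_prop)
    (by fun_prop) fun t ht => mul_ne_zero hχ (hY t ht)) (by fun_prop))

lemma sturmEnergy_zero_le (hα0 : 0 ≤ α) (hχ : 0 < χ) (hq0 : 0 ≤ q) (hq1 : q < 1)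
    (h1 : ∀ x, HasDerivAt ψ (ψ' x) x) (h2 : ∀ x, HasDerivAt ψ' (ψ'' x) x)
    (hode : ∀ x ∈ Set.Ioo (-1 : ℝ) 1,
      (1 - x ^ 2) * ψ'' x = 2 * (α + 1) * x * ψ' x - χ * (1 - q * x ^ 2) * ψ x)
    {x : ℝ} (hx : x ∈ Set.Icc (-1 : ℝ) 1) :
    ψ 0 ^ 2 + ψ' 0 ^ 2 / χ ≤ sturmEnergy χ q ψ ψ' x := by
  have hX : ∀ t ∈ Set.Icc (-1 : ℝ) 1, 0 ≤ 1 - t ^ 2 := fun t ht => by nlinarith [ht.1, ht.2]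
  have hY : ∀ t ∈ Set.Icc (-1 : ℝ) 1, 0 < 1 - q * t ^ 2 := fun t ht => by nlinarith [hX t ht]
  have hcψ : Continuous ψ := continuous_iff_continuousAt.2 fun x => (h1 x).continuousAt
  have hcψ' : Continuous ψ' := continuous_iff_continuousAt.2 fun x => (h2 x).continuousAt
  have hcont : ContinuousOn (sturmEnergy χ q ψ ψ') (Set.Icc (-1) 1) :=
    continuousOn_sturmEnergy hχ.ne' (fun t ht => (hY t ht).ne') hcψ hcψ'
  have h0 : sturmEnergy χ q ψ ψ' 0 = ψ 0 ^ 2 + ψ' 0 ^ 2 / χ := by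
    simp [sturmEnergy]; ring
  have hfac : ∀ t ∈ Set.Icc (-1 : ℝ) 1, 0 ≤ ((2 * α + 1) * (1 - q * t ^ 2) + q * (1 - t ^ 2)) :=
    fun t ht => by have := hX t ht; have := hY t ht; positivity
  rw [← h0]
  rcases le_total 0 x with h | h
  · refine monotoneOn_of_hasDerivWithinAt_nonneg (convex_Icc 0 1)
      (hcont.mono (Set.Icc_subset_Icc_left (by norm_num)))
      (fun t ht => (hasDerivAt_sturmEnergy hχ h1 h2 hode (α := α) ?_ ?_).hasDerivWithinAt)
      (fun t ht => ?_) ⟨le_rfl, zero_le_one⟩ ⟨h, hx.2⟩ h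
    all_goals rw [interior_Icc] at ht
    · exact ⟨by linarith [ht.1], ht.2⟩
    · exact (hY t ⟨by linarith [ht.1], ht.2.le⟩).ne'
    · have := hfac t ⟨by linarith [ht.1], ht.2.le⟩
      have := ht.1
      positivity
  · refine antitoneOn_of_hasDerivWithinAt_nonpos (convex_Icc (-1) 0)
      (hcont.mono (Set.Icc_subset_Icc_right (by norm_num)))
      (fun t ht => (hasDerivAt_sturmEnergy hχ h1 h2 hode (α := α) ?_ ?_).hasDerivWithinAt)
      (fun t ht => ?_) ⟨hx.1, h⟩ ⟨by norm_num, le_rfl⟩ h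
    all_goals rw [interior_Icc] at ht
    · exact ⟨ht.1, by linarith [ht.2]⟩
    · exact (hY t ⟨ht.1.le, by linarith [ht.2]⟩).ne'
    · have h3 := hfac t ⟨ht.1.le, by linarith [ht.2]⟩
      refine div_nonpos_of_nonpos_of_nonneg (mul_nonpos_of_nonpos_of_nonneg
        (mul_nonpos_of_nonpos_of_nonneg (by linarith [ht.2]) h3) (by positivity)) (by positivity)

/-- The inequalities between the moments of `ω_α` and of `ψ² ω_α` bound the initial energy `A`
times the mass `I0` of the weight. -/
lemma mul_mass_le_two {A I0 I2 I4 M2 k : ℝ} (hα0 : 0 ≤ α) (hq0 : 0 ≤ q) (hq : q ≤ 3 / 17)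
    (hA0 : 0 ≤ A) (hI2 : 0 ≤ I2) (hM2 : 0 ≤ M2) (hI42 : I4 ≤ I2) (hI0 : I0 = (2 * α + 3) * I2)
    (hmean : A * (I0 - q * I2) ≤ 2 * (1 - q * M2))
    (hsecond : (2 * α + 3) * M2 ≤ 1 → A * (I2 - q * I4) ≤ 2 * k)
    (hgrowth : 0 ≤ (2 * α + 2) * (2 * (1 - q * M2) - A * (I0 - q * I2))
      - (1 - q) * (2 * (2 * α + 1)) * k) : A * I0 ≤ 2 := by
  have hq1 : 0 ≤ 1 - q := by linarith
  have hAI : 0 ≤ A * I2 := mul_nonneg hA0 hI2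
  rcases le_total 1 ((2 * α + 3) * M2) with hm | hm
  · have h : (A * I0 - 2) * (2 * α + 3 - q) ≤ 0 := by
      have e' := mul_le_mul_of_nonneg_left hmean (by linarith : 0 ≤ 2 * α + 3)
      have e'' := mul_le_mul_of_nonneg_left hm hq0
      linear_combination e' + 2 * e'' - A * q * hI0
    have := nonpos_of_mul_nonpos_left h (by linarith)
    linarith
  · have e2 : A * (1 - q) * I2 ≤ 2 * k := by
      have := mul_le_mul_of_nonneg_left hI42 (mul_nonneg hA0 hq0)
      linarith [hsecond hm]
    have hk : 0 ≤ k := by linarith [mul_nonneg hq1 hAI]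
    have e3 : (1 - q) * k ≤ 2 * (1 - q * M2) - A * (I0 - q * I2) := by
      refine le_of_mul_le_mul_left ?_ (by linarith : 0 < 2 * α + 2)
      linarith [mul_nonneg (mul_nonneg hq1 hα0) hk]
    have e4 := mul_le_mul_of_nonneg_left e2 hq1
    have e5 : q * (A * I2) ≤ (1 - q) ^ 2 / 2 * (A * I2) :=
      mul_le_mul_of_nonneg_right (by nlinarith) hAI
    linarith [mul_nonneg hq0 hM2]

/-- Pointwise comparison, with `w = ω_α(x)`, `d = ψ'(x)` and `z` the growth of the energy, between
the derivative of `x (1-x²) ω_α z` and the integrands of the moments. -/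
lemma growth_pointwise_le {x z w d : ℝ} (hα0 : 0 ≤ α) (hχ : 0 < χ) (hq0 : 0 ≤ q) (hq1 : q ≤ 1)
    (hX : 0 ≤ 1 - x ^ 2) (hY : 0 < 1 - q * x ^ 2) (hw : 0 ≤ w) (hz : 0 ≤ z) :
    -(1 - q) * (2 * x * ((2 * α + 1) * (1 - q * x ^ 2) + q * (1 - x ^ 2)) * d ^ 2 /
        (χ * (1 - q * x ^ 2) ^ 2) * ((1 - x ^ 2) * w * x)
        + z * (w * (1 - (2 * α + 3) * x ^ 2))) ≤
      (2 * α + 2) * (w * (1 - q * x ^ 2) * z)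
        + -((1 - q) * (2 * (2 * α + 1)) / χ) * (x ^ 2 * ((1 - x ^ 2) * w * d ^ 2))
        + 0 * w + 0 * w := by
  replace hq1 : 0 ≤ 1 - q := by linarith
  have h1 : 0 ≤ w * z * ((2 * α + 2) * (1 - q * x ^ 2)
      + (1 - q) * (1 - (2 * α + 3) * x ^ 2)) := by
    refine mul_nonneg (mul_nonneg hw hz) ?_
    have : (2 * α + 2) * (1 - q * x ^ 2) + (1 - q) * (1 - (2 * α + 3) * x ^ 2) =
        (2 * α + 2) * (1 - x ^ 2) + (1 - q) * (1 - x ^ 2) := by ring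
    rw [this]
    positivity
  have h2 : (2 * α + 1) ≤ ((2 * α + 1) * (1 - q * x ^ 2) + q * (1 - x ^ 2)) /
      (1 - q * x ^ 2) ^ 2 := by
    rw [le_div_iff₀ (by positivity)]
    have : 0 ≤ (2 * α + 1) * ((1 - q * x ^ 2) * (q * x ^ 2)) := by positivity
    linarith [mul_nonneg hq0 hX]
  have h3 := mul_le_mul_of_nonneg_left h2 (by positivity :
    0 ≤ (1 - q) * 2 / χ * (x ^ 2 * ((1 - x ^ 2) * w * d ^ 2)))
  have h4 : 2 * x * ((2 * α + 1) * (1 - q * x ^ 2) + q * (1 - x ^ 2)) *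
      d ^ 2 / (χ * (1 - q * x ^ 2) ^ 2) * ((1 - x ^ 2) * w * x) =
      2 / χ * (x ^ 2 * ((1 - x ^ 2) * w * d ^ 2)) *
      (((2 * α + 1) * (1 - q * x ^ 2) + q * (1 - x ^ 2)) / (1 - q * x ^ 2) ^ 2) := by
    field_simp
  rw [h4]
  linear_combination h1 + h3

/-- Bound of the initial energy of a normalized eigenfunction. -/
lemma initial_energy_le (hα0 : 0 ≤ α) (hχ : 0 < χ) (hq0 : 0 ≤ q)
    (hq : q ≤ 3 / 17) (h1 : ∀ x, HasDerivAt ψ (ψ' x) x)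
    (h2 : ∀ x, HasDerivAt ψ' (ψ'' x) x)
    (hode : ∀ x ∈ Set.Ioo (-1 : ℝ) 1,
      (1 - x ^ 2) * ψ'' x = 2 * (α + 1) * x * ψ' x - χ * (1 - q * x ^ 2) * ψ x)
    (hnorm : (∫ x in (-1 : ℝ)..1, ψ x ^ 2 * (1 - x ^ 2) ^ α) = 1) :
    ψ 0 ^ 2 + ψ' 0 ^ 2 / χ ≤ 1 + α := by
  have hX : ∀ t ∈ Set.Icc (-1 : ℝ) 1, 0 ≤ 1 - t ^ 2 := fun t ht => by nlinarith [ht.1, ht.2]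
  have hXo : ∀ t ∈ Set.Ioo (-1 : ℝ) 1, 0 < 1 - t ^ 2 := fun t ht => by nlinarith [ht.1, ht.2]
  have hY : ∀ t ∈ Set.Icc (-1 : ℝ) 1, 0 < 1 - q * t ^ 2 := fun t ht => by nlinarith [hX t ht]
  have hcψ : Continuous ψ := continuous_iff_continuousAt.2 fun x => (h1 x).continuousAt
  have hcψ' : Continuous ψ' := continuous_iff_continuousAt.2 fun x => (h2 x).continuousAt
  have hA := fun x hx => sturmEnergy_zero_le (x := x) hα0 hχ hq0 (by linarith) h1 h2 hode hx
  have hdZ := fun x hx => hasDerivAt_sturmEnergy (x := x) hχ h1 h2 hode hx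
    (hY x (Set.Ioo_subset_Icc_self hx)).ne'
  have hA0 : 0 ≤ ψ 0 ^ 2 + ψ' 0 ^ 2 / χ := by positivity
  generalize ψ 0 ^ 2 + ψ' 0 ^ 2 / χ = A at hA hA0 ⊢
  have hcω := continuous_one_sub_sq_rpow hα0
  have hI := two_div_le_integral_one_sub_sq_rpow hα0
  have hω0 : ∀ x ∈ Set.Icc (-1 : ℝ) 1, 0 ≤ (1 - x ^ 2) ^ α := fun x hx => rpow_nonneg (hX x hx) _
  have hdp : ∀ x ∈ Set.Ioo (-1 : ℝ) 1, HasDerivAt (fun x : ℝ => (1 - x ^ 2) * (1 - x ^ 2) ^ α)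
      (-(2 * (α + 1) * x * (1 - x ^ 2) ^ α)) x := fun x hx => by
    refine ((hasDerivAt_one_sub_sq x).fun_mul
      (hasDerivAt_one_sub_sq_rpow α (hXo x hx))).congr_deriv ?_
    have := (hXo x hx).ne'
    field_simp
    ring
  generalize hω : (fun x : ℝ => (1 - x ^ 2) ^ α) = ω at hcω
  have hω' : ∀ x : ℝ, (1 - x ^ 2) ^ α = ω x := fun x => by rw [← hω]
  simp only [hω'] at hnorm hI hω0 hdp
  clear hω hω'
  set I0 := ∫ x in (-1 : ℝ)..1, ω x
  set I2 := ∫ x in (-1 : ℝ)..1, x ^ 2 * ω x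
  set I4 := ∫ x in (-1 : ℝ)..1, x ^ 4 * ω x
  set M2 := ∫ x in (-1 : ℝ)..1, x ^ 2 * (ψ x ^ 2 * ω x)
  set M4 := ∫ x in (-1 : ℝ)..1, x ^ 4 * (ψ x ^ 2 * ω x)
  set K0 := ∫ x in (-1 : ℝ)..1, (1 - x ^ 2) * ω x * ψ' x ^ 2
  set K2 := ∫ x in (-1 : ℝ)..1, x ^ 2 * ((1 - x ^ 2) * ω x * ψ' x ^ 2)
  have cI2 : Continuous fun x => x ^ 2 * ω x := by fun_prop
  have cI4 : Continuous fun x => x ^ 4 * ω x := by fun_prop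
  have cM0 : Continuous fun x => ψ x ^ 2 * ω x := by fun_prop
  have cM2 : Continuous fun x => x ^ 2 * (ψ x ^ 2 * ω x) := by fun_prop
  have cM4 : Continuous fun x => x ^ 4 * (ψ x ^ 2 * ω x) := by fun_prop
  have cK0 : Continuous fun x => (1 - x ^ 2) * ω x * ψ' x ^ 2 := by fun_prop
  have cK2 : Continuous fun x => x ^ 2 * ((1 - x ^ 2) * ω x * ψ' x ^ 2) := by fun_prop
  -- integrations by parts
  have E1 : K0 - χ + χ * q * M2 = 0 := by
    have h := integral_eq_zero_of_hasDerivAt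
      (f := fun x => (1 - x ^ 2) * ω x * (ψ x * ψ' x))
      (f' := fun x => 1 * ((1 - x ^ 2) * ω x * ψ' x ^ 2) + (-χ) * (ψ x ^ 2 * ω x)
        + (χ * q) * (x ^ 2 * (ψ x ^ 2 * ω x)) + 0 * ω x) (by fun_prop)
      (fun x hx => ((hdp x hx).fun_mul ((h1 x).fun_mul (h2 x))).congr_deriv
        (by linear_combination (ω x * ψ x) * hode x hx)) (by fun_prop) (by simp) (by simp)
    rw [integral_linear_combination cK0 cM0 cM2 hcω, hnorm] at h
    linarith
  have E2 : K2 - χ * M2 + χ * q * M4 - 1 + (2 * α + 3) * M2 = 0 := by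
    have h := integral_eq_zero_of_hasDerivAt
      (f := fun x => (1 - x ^ 2) * ω x * (x ^ 2 * (ψ x * ψ' x) - x * ψ x ^ 2))
      (f' := fun x => 1 * (x ^ 2 * ((1 - x ^ 2) * ω x * ψ' x ^ 2))
        + (2 * α + 3 - χ) * (x ^ 2 * (ψ x ^ 2 * ω x))
        + (χ * q) * (x ^ 4 * (ψ x ^ 2 * ω x)) + (-1) * (ψ x ^ 2 * ω x)) (by fun_prop)
      (fun x hx => ((hdp x hx).fun_mul (((hasDerivAt_pow 2 x).fun_mul
        ((h1 x).fun_mul (h2 x))).fun_sub ((hasDerivAt_id x).fun_mul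
          ((h1 x).fun_pow 2)))).congr_deriv
        (by simp only [id]; push_cast; linear_combination (x ^ 2 * ω x * ψ x) * hode x hx))
      (by fun_prop) (by simp) (by simp)
    rw [integral_linear_combination cK2 cM2 cM4 cM0, hnorm] at h
    linarith
  have E3 : I0 = (2 * α + 3) * I2 := by
    have h := integral_eq_zero_of_hasDerivAt
      (f := fun x => (1 - x ^ 2) * ω x * x)
      (f' := fun x => 1 * ω x + (-(2 * α + 3)) * (x ^ 2 * ω x) + 0 * ω x + 0 * ω x)
      (by fun_prop)
      (fun x hx => ((hdp x hx).fun_mul (hasDerivAt_id x)).congr_deriv (by simp only [id]; ring))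
      (by fun_prop) (by simp) (by simp)
    rw [integral_linear_combination hcω cI2 hcω hcω] at h
    linarith
  -- comparison of the energy with its value at the origin
  let B : ℝ → ℝ := fun x => 1 * (ψ x ^ 2 * ω x) + (-q) * (x ^ 2 * (ψ x ^ 2 * ω x))
      + 1 / χ * ((1 - x ^ 2) * ω x * ψ' x ^ 2) + (-A) * (ω x - q * (x ^ 2 * ω x))
  have hBeq : ∀ x ∈ Set.Icc (-1 : ℝ) 1,
      B x = ω x * (1 - q * x ^ 2) * (sturmEnergy χ q ψ ψ' x - A) := fun x hx => by
    have := (hY x hx).ne'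
    have : 1 - x ^ 2 * q ≠ 0 := by rwa [mul_comm (x ^ 2)]
    simp only [sturmEnergy, B]
    field_simp
    ring
  have hB : ∀ x ∈ Set.Icc (-1 : ℝ) 1, 0 ≤ B x := fun x hx => by
    rw [hBeq x hx]
    exact mul_nonneg (mul_nonneg (hω0 x hx) (hY x hx).le) (sub_nonneg.2 (hA x hx))
  have cIq : Continuous fun x => ω x - q * (x ^ 2 * ω x) := by fun_prop
  have hIq : ∫ x in (-1 : ℝ)..1, (ω x - q * (x ^ 2 * ω x)) = I0 - q * I2 := by
    rw [integral_sub (hcω.intervalIntegrable _ _)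
      (Continuous.intervalIntegrable (by fun_prop) _ _), intervalIntegral.integral_const_mul]
  have hBint : ∫ x in (-1 : ℝ)..1, B x = 1 - q * M2 + K0 / χ - A * (I0 - q * I2) := by
    rw [integral_linear_combination cM0 cM2 cK0 cIq, hnorm, hIq]
    ring
  have E5 : 0 ≤ ∫ x in (-1 : ℝ)..1, B x := integral_nonneg (by norm_num) hB
  have E6 : 0 ≤ M2 - q * M4 + K2 / χ - A * (I2 - q * I4) := by
    have h : 0 ≤ ∫ x in (-1 : ℝ)..1, (1 * (x ^ 2 * (ψ x ^ 2 * ω x))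
        + (-q) * (x ^ 4 * (ψ x ^ 2 * ω x)) + 1 / χ * (x ^ 2 * ((1 - x ^ 2) * ω x * ψ' x ^ 2))
        + (-A) * (x ^ 2 * ω x - q * (x ^ 4 * ω x))) :=
      integral_nonneg (by norm_num) fun x hx =>
        (mul_nonneg (sq_nonneg x) (hB x hx)).trans_eq (by simp only [B]; ring)
    rw [integral_linear_combination cM2 cM4 cK2 (by fun_prop),
      integral_sub (cI2.intervalIntegrable _ _)
      (Continuous.intervalIntegrable (by fun_prop) _ _), intervalIntegral.integral_const_mul] at h
    linarith [show 1 / χ * K2 = K2 / χ by ring]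
  have hI42 : I4 ≤ I2 := integral_mono_on (by norm_num) (cI4.intervalIntegrable _ _)
    (cI2.intervalIntegrable _ _) fun x hx =>
      mul_le_mul_of_nonneg_right (by nlinarith [hX x hx, sq_nonneg x]) (hω0 x hx)
  have hI2pos : 0 ≤ I2 := integral_nonneg (by norm_num) fun x hx =>
    mul_nonneg (sq_nonneg x) (hω0 x hx)
  have hM2pos : 0 ≤ M2 := integral_nonneg (by norm_num) fun x hx =>
    mul_nonneg (sq_nonneg x) (mul_nonneg (sq_nonneg _) (hω0 x hx))
  -- the growth of the energy away from the origin
  have E4 : 0 ≤ (2 * α + 2) * (∫ x in (-1 : ℝ)..1, B x)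
      - (1 - q) * (2 * (2 * α + 1)) * (K2 / χ) := by
    have hcZ : ContinuousOn (sturmEnergy χ q ψ ψ') (Set.Icc (-1) 1) :=
      continuousOn_sturmEnergy hχ.ne' (fun t ht => (hY t ht).ne') hcψ hcψ'
    have hc : ContinuousOn (fun x => 2 * x * ((2 * α + 1) * (1 - q * x ^ 2) + q * (1 - x ^ 2)) *
        ψ' x ^ 2 / (χ * (1 - q * x ^ 2) ^ 2) * ((1 - x ^ 2) * ω x * x)
        + (sturmEnergy χ q ψ ψ' x - A) * (ω x * (1 - (2 * α + 3) * x ^ 2))) (Set.Icc (-1) 1) :=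
      ContinuousOn.add (ContinuousOn.mul (ContinuousOn.div (by fun_prop) (by fun_prop)
        fun t ht => mul_ne_zero hχ.ne' (pow_ne_zero _ (hY t ht).ne')) (by fun_prop)) (by fun_prop)
    have h := integral_eq_zero_of_hasDerivAt
      (f := fun x => (sturmEnergy χ q ψ ψ' x - A) * ((1 - x ^ 2) * ω x * x)) (by fun_prop)
      (fun x hx => (((hdZ x hx).sub_const A).fun_mul
        ((hdp x hx).fun_mul (hasDerivAt_id x))).congr_deriv (by simp only [id]; ring))
      hc (by simp) (by simp)
    have cB : Continuous B := by fun_prop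
    have hlin := integral_linear_combination cB cK2 hcω hcω (2 * α + 2)
      (-((1 - q) * (2 * (2 * α + 1)) / χ)) 0 0
    have hle := integral_mono_on (μ := volume) (by norm_num : (-1 : ℝ) ≤ 1)
      (ContinuousOn.intervalIntegrable_of_Icc (by norm_num) (hc.const_mul (-(1 - q))))
      (Continuous.intervalIntegrable (by fun_prop : Continuous fun x => (2 * α + 2) * B x
        + -((1 - q) * (2 * (2 * α + 1)) / χ) * (x ^ 2 * ((1 - x ^ 2) * ω x * ψ' x ^ 2))
        + 0 * ω x + 0 * ω x) _ _) fun x hx => ?_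
    · rw [intervalIntegral.integral_const_mul, h, hlin] at hle
      linear_combination hle
    · rw [hBeq x hx]
      exact growth_pointwise_le hα0 hχ hq0 (by linarith) (hX x hx) (hY x hx) (hω0 x hx)
        (sub_nonneg.2 (hA x hx))
  have hK0' : K0 / χ = 1 - q * M2 := by
    rw [div_eq_iff hχ.ne']; linarith
  have hK2' : K2 / χ = M2 - q * M4 + (1 - (2 * α + 3) * M2) / χ := by
    field_simp; linarith
  rw [hBint] at E4 E5
  have hAI : A * I0 ≤ 2 := by
    refine mul_mass_le_two (I4 := I4) hα0 hq0 hq hA0 hI2pos hM2pos hI42 E3 (k := K2 / χ)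
      (by linarith) (fun hm => ?_) (by rw [hK0'] at E4; linarith)
    have hT : 0 ≤ (1 - (2 * α + 3) * M2) / χ := div_nonneg (by linarith) hχ.le
    linarith
  have := mul_le_mul_of_nonneg_left hI hA0
  rw [mul_div_assoc', div_le_iff₀ (by linarith)] at this
  nlinarith

end Energy

/-- Local estimate for GPSWFs: let `ψ = ψ_{n,c}^{(α)}` be the `L²(I,ω_α)`-normalized smooth
eigenfunction of `L_c^{(α)} f = -(1-x²)f'' + 2(α+1)x f' + c²x² f` with eigenvalue `χ > 0`, with
`0 ≤ α ≤ 1/4`, `c > 0` and `q = c²/χ < 3/17`. Then for every `x ∈ [0,1]`,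
`√((1-x²)(1-qx²)) (1-x²)^α ψ(x)² ≤ ψ(0)² + ψ'(0)²/χ ≤ 2α+1`. -/
theorem gpswf_local_estimate (c α χ : ℝ) (hc : 0 < c) (hα0 : 0 ≤ α) (hα1 : α ≤ 1/4)
    (hχ : 0 < χ) (hq : c ^ 2 / χ < 3/17)
    (ψ : ℝ → ℝ) (hsmooth : ContDiff ℝ 2 ψ)
    (heig : ∀ x ∈ Set.Ioo (-1 : ℝ) 1,
      -(1 - x ^ 2) * deriv (deriv ψ) x + 2 * (α + 1) * x * deriv ψ x +
        c ^ 2 * x ^ 2 * ψ x = χ * ψ x)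
    (hnorm : (∫ x in (-1 : ℝ)..1, (ψ x) ^ 2 * (1 - x ^ 2) ^ α) = 1) :
    (∀ x ∈ Set.Icc (0 : ℝ) 1,
      Real.sqrt ((1 - x ^ 2) * (1 - (c ^ 2 / χ) * x ^ 2)) * (1 - x ^ 2) ^ α * (ψ x) ^ 2
        ≤ (ψ 0) ^ 2 + (deriv ψ 0) ^ 2 / χ) ∧
    (ψ 0) ^ 2 + (deriv ψ 0) ^ 2 / χ ≤ 2 * α + 1 := by
  have hq0 : 0 ≤ c ^ 2 / χ := by positivity
  have hcq : c ^ 2 = χ * (c ^ 2 / χ) := by field_simp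
  have hd : ∀ x, HasDerivAt ψ (deriv ψ x) x := fun x =>
    (hsmooth.differentiable (by norm_num) x).hasDerivAt
  have hd' : ∀ x, HasDerivAt (deriv ψ) (deriv (deriv ψ) x) x := fun x =>
    (hsmooth.differentiable_deriv_two x).hasDerivAt
  have hode : ∀ x ∈ Set.Ioo (-1 : ℝ) 1, (1 - x ^ 2) * deriv (deriv ψ) x =
      2 * (α + 1) * x * deriv ψ x - χ * (1 - c ^ 2 / χ * x ^ 2) * ψ x := fun x hx => by
    linear_combination x ^ 2 * ψ x * hcq - heig x hx
  refine ⟨fun x hx => amplitude_mul_sq_le hα0 hα1 hχ hq0 hq.le hd hd' hode hx, ?_⟩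
  linarith [initial_energy_le hα0 hχ hq0 hq.le hd hd' hode hnorm]
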